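/- Let n ≥ 1 and let q ∈ ℂ be nonzero and not a root of unity. Then the trivial left 𝔥_n(q)-module ℂ_ε admits a finite free resolution 0 → P_{3n} → ⋯ → P_1 → P_0 → ℂ_ε → 0 of length 3n in which the k-th term P_k is a free left 𝔥_n(q)-module of rank Nat.choose (3n) k. -/

import Mathlib

noncomputable section

open scoped BigOperators

namespace QHeisenberg

/-- Index type for the `3n` generators: `x`-, `y`-, and `z`-variables. -/
abbrev GenIdx (n : ℕ) := Fin n ⊕ (Fin n ⊕ Fin n)

/-- The `x_i` generator in the free algebra. -/
def fX (n : ℕ) (i : Fin n) : FreeAlgebra ℂ (GenIdx n) := FreeAlgebra.ι ℂ (Sum.inl i)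

/-- The `y_i` generator in the free algebra. -/
def fY (n : ℕ) (i : Fin n) : FreeAlgebra ℂ (GenIdx n) := FreeAlgebra.ι ℂ (Sum.inr (Sum.inl i))

/-- The `z_i` generator in the free algebra. -/
def fZ (n : ℕ) (i : Fin n) : FreeAlgebra ℂ (GenIdx n) := FreeAlgebra.ι ℂ (Sum.inr (Sum.inr i))

/-- The defining relations of the q-Heisenberg algebra `𝔥_n(q)`. -/
inductive Rel (n : ℕ) (q : ℂ) :
    FreeAlgebra ℂ (GenIdx n) → FreeAlgebra ℂ (GenIdx n) → Prop
  | xx (i j : Fin n) : Rel n q (fX n i * fX n j) (fX n j * fX n i)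
  | yy (i j : Fin n) : Rel n q (fY n i * fY n j) (fY n j * fY n i)
  | zz (i j : Fin n) : Rel n q (fZ n i * fZ n j) (fZ n j * fZ n i)
  | xz (i : Fin n) : Rel n q (fX n i * fZ n i) (q • (fZ n i * fX n i))
  | yz (i : Fin n) : Rel n q (fY n i * fZ n i) (q⁻¹ • (fZ n i * fY n i))
  | xy (i : Fin n) : Rel n q (fX n i * fY n i) (q⁻¹ • (fY n i * fX n i) + fZ n i)
  | xyne (i j : Fin n) : i ≠ j → Rel n q (fX n i * fY n j) (fY n j * fX n i)
  | xzne (i j : Fin n) : i ≠ j → Rel n q (fX n i * fZ n j) (fZ n j * fX n i)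
  | yzne (i j : Fin n) : i ≠ j → Rel n q (fY n i * fZ n j) (fZ n j * fY n i)

/-- The q-Heisenberg algebra `𝔥_n(q)`. -/
abbrev H (n : ℕ) (q : ℂ) := RingQuot (Rel n q)

/-- The generator `x_i` of `𝔥_n(q)`. -/
def X (n : ℕ) (q : ℂ) (i : Fin n) : H n q := RingQuot.mkAlgHom ℂ (Rel n q) (fX n i)

/-- The generator `y_i` of `𝔥_n(q)`. -/
def Y (n : ℕ) (q : ℂ) (i : Fin n) : H n q := RingQuot.mkAlgHom ℂ (Rel n q) (fY n i)

/-- The generator `z_i` of `𝔥_n(q)`. -/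
def Z (n : ℕ) (q : ℂ) (i : Fin n) : H n q := RingQuot.mkAlgHom ℂ (Rel n q) (fZ n i)

/-- `q` is not a root of unity: `q ^ k ≠ 1` for every `k ≥ 1`. -/
def NotRootOfUnity (q : ℂ) : Prop := ∀ k : ℕ, 1 ≤ k → q ^ k ≠ 1

end QHeisenberg

namespace QHeisenberg

open CategoryTheory

/-- The augmentation homomorphism `ε : 𝔥_n(q) → ℂ` sending every generator to `0`. -/
def eps (n : ℕ) (q : ℂ) : H n q →ₐ[ℂ] ℂ :=
  RingQuot.liftAlgHom ℂ ⟨FreeAlgebra.lift ℂ (fun _ => (0 : ℂ)), by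
    intro a b h
    induction h <;> simp [fX, fY, fZ]⟩

/-- The trivial left `𝔥_n(q)`-module `ℂ_ε`: the complex numbers, with every generator
acting by `0` (restriction of scalars along `ε`). -/
def trivMod (n : ℕ) (q : ℂ) : ModuleCat (H n q) :=
  (ModuleCat.restrictScalars (eps n q).toRingHom).obj (ModuleCat.of ℂ ℂ)

/-- `M` has a free resolution of length `< N` with ranks `a`. -/
def HasRes (R : Type) [Ring R] : ℕ → (ℕ → ℕ) → (M : Type) → [AddCommGroup M] → [Module R M] → Prop
  | 0, a, M, _, _ => Subsingleton M ∧ ∀ k, a k = 0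
  | N + 1, a, M, _, _ => ∃ f : (Fin (a 0) → R) →ₗ[R] M, Function.Surjective f ∧
      HasRes R N (fun k => a (k + 1)) (LinearMap.ker f)

section homological
variable {R : Type} [Ring R]

lemma HasRes.congr {N : ℕ} {a : ℕ → ℕ} {M M' : Type} [AddCommGroup M] [Module R M]
    [AddCommGroup M'] [Module R M'] (e : M ≃ₗ[R] M') (h : HasRes R N a M) : HasRes R N a M' := by
  cases N with
  | zero => exact ⟨by have := h.1; exact e.symm.toEquiv.subsingleton, h.2⟩
  | succ N =>
    obtain ⟨f, hf, hk⟩ := h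
    refine ⟨e.toLinearMap ∘ₗ f, e.surjective.comp hf, ?_⟩
    rw [LinearEquiv.ker_comp]
    exact hk

lemma HasRes.mk' {N : ℕ} {a : ℕ → ℕ} {M F : Type} [AddCommGroup M] [Module R M]
    [AddCommGroup F] [Module R F] (e : (Fin (a 0) → R) ≃ₗ[R] F) (f : F →ₗ[R] M)
    (hf : Function.Surjective f) (h : HasRes R N (fun k => a (k + 1)) (LinearMap.ker f)) :
    HasRes R (N + 1) a M := by
  refine ⟨f ∘ₗ e.toLinearMap, hf.comp e.surjective, ?_⟩
  rw [LinearMap.ker_comp]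
  exact h.congr (e.ofSubmodule' _).symm

lemma HasRes.bump {N : ℕ} {a : ℕ → ℕ} {M : Type} [AddCommGroup M] [Module R M]
    (h : HasRes R N a M) : HasRes R (N + 1) a M := by
  induction N generalizing a M with
  | zero =>
    obtain ⟨h1, h2⟩ := h
    refine ⟨0, fun x => ⟨0, Subsingleton.elim _ _⟩, ?_, fun k => h2 _⟩
    have : IsEmpty (Fin (a 0)) := by rw [h2]; infer_instance
    infer_instance
  | succ N ih =>
    obtain ⟨f, hf, hk⟩ := h
    exact ⟨f, hf, ih hk⟩

lemma HasRes.horseshoe {N : ℕ} {a b : ℕ → ℕ} {K L A : Type} [AddCommGroup K] [Module R K]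
    [AddCommGroup L] [Module R L] [AddCommGroup A] [Module R A]
    (i : K →ₗ[R] L) (p : L →ₗ[R] A) (hi : Function.Injective i) (hp : Function.Surjective p)
    (hip : Function.Exact i p) (hK : HasRes R N a K) (hA : HasRes R N b A) :
    HasRes R N (fun k => a k + b k) L := by
  induction N generalizing a b K L A with
  | zero =>
    have := hK.1
    have := hA.1
    refine ⟨⟨fun x y => ?_⟩, fun k => by simp [hK.2, hA.2]⟩
    have h0 : ∀ x : L, x = 0 := fun x => by
      obtain ⟨k, rfl⟩ := (hip x).1 (Subsingleton.elim _ _)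
      rw [Subsingleton.elim k 0, map_zero]
    rw [h0 x, h0 y]
  | succ N ih =>
    obtain ⟨f, hf, hfk⟩ := hK
    obtain ⟨g, hg, hgk⟩ := hA
    obtain ⟨l, hl⟩ := Module.projective_lifting_property p g hp
    have hl' : ∀ y, p (l y) = g y := fun y => by rw [← hl]; rfl
    have hpi : ∀ k, p (i k) = 0 := fun k => (hip _).2 ⟨k, rfl⟩
    let F : (Fin (a 0) → R) × (Fin (b 0) → R) →ₗ[R] L := (i ∘ₗ f).coprod l
    have hF : ∀ x, F x = i (f x.1) + l x.2 := fun x => rfl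
    refine HasRes.mk' (F := (Fin (a 0) → R) × (Fin (b 0) → R))
      ((LinearEquiv.funCongrLeft R R finSumFinEquiv).trans
        (LinearEquiv.sumArrowLequivProdArrow _ _ R R)) F ?_ ?_
    · intro x
      obtain ⟨y, hy⟩ := hg (p x)
      obtain ⟨k, hk⟩ := (hip (x - l y)).1 (by rw [map_sub, hl', hy, sub_self])
      obtain ⟨u, rfl⟩ := hf k
      exact ⟨(u, y), by rw [hF, hk]; simp⟩
    · let j : LinearMap.ker f →ₗ[R] LinearMap.ker F :=
        ((LinearMap.inl R (Fin (a 0) → R) (Fin (b 0) → R)) ∘ₗ (LinearMap.ker f).subtype).codRestrict _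
          (fun x => by
            have := x.2
            rw [LinearMap.mem_ker] at this
            simp [hF, this])
      let r : LinearMap.ker F →ₗ[R] LinearMap.ker g :=
        ((LinearMap.snd R (Fin (a 0) → R) (Fin (b 0) → R)) ∘ₗ (LinearMap.ker F).subtype).codRestrict _
          (fun x => by
            have := x.2
            rw [LinearMap.mem_ker, hF] at this
            have h2 := congrArg p this
            rw [map_add, hpi, hl', zero_add, map_zero] at h2
            exact h2)
      refine ih j r ?_ ?_ ?_ hfk hgk
      · intro x y hxy
        have h1 : ((j x).1).1 = ((j y).1).1 := by rw [hxy]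
        exact Subtype.ext h1
      · rintro ⟨y, hy⟩
        rw [LinearMap.mem_ker] at hy
        obtain ⟨k, hk⟩ := (hip (l y)).1 (by rw [hl', hy])
        obtain ⟨u, rfl⟩ := hf k
        exact ⟨⟨(-u, y), by rw [LinearMap.mem_ker, hF]; simp [hk]⟩, rfl⟩
      · rintro ⟨⟨u, y⟩, hy⟩
        constructor
        · intro h
          have hy0 : y = 0 := congrArg Subtype.val h
          subst hy0
          rw [LinearMap.mem_ker, hF] at hy
          simp only [map_zero, add_zero] at hy
          exact ⟨⟨u, hi (by rw [hy, map_zero])⟩, rfl⟩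
        · rintro ⟨x, hx⟩
          rw [← hx]
          rfl

lemma HasRes.cone {N : ℕ} {a b c : ℕ → ℕ} {A B C : Type} [AddCommGroup A] [Module R A]
    [AddCommGroup B] [Module R B] [AddCommGroup C] [Module R C]
    (i : A →ₗ[R] B) (p : B →ₗ[R] C) (hi : Function.Injective i) (hp : Function.Surjective p)
    (hip : Function.Exact i p) (hA : HasRes R N a A) (hB : HasRes R (N + 1) b B)
    (hc0 : c 0 = b 0) (hc : ∀ k, c (k + 1) = b (k + 1) + a k) :
    HasRes R (N + 1) c C := by
  obtain ⟨f, hf, hk⟩ := hB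
  have hpi : ∀ k, p (i k) = 0 := fun k => (hip _).2 ⟨k, rfl⟩
  refine HasRes.mk' (F := Fin (b 0) → R)
    (LinearEquiv.funCongrLeft R R (finCongr hc0.symm)) (p ∘ₗ f) (hp.comp hf) ?_
  have : (fun k => c (k + 1)) = fun k => b (k + 1) + a k := funext hc
  rw [this]
  let j : LinearMap.ker f →ₗ[R] LinearMap.ker (p ∘ₗ f) :=
    (LinearMap.ker f).subtype.codRestrict _ (fun x => by
      have := x.2
      rw [LinearMap.mem_ker] at this
      simp [this])
  let r' : LinearMap.ker (p ∘ₗ f) →ₗ[R] LinearMap.range i :=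
    (f ∘ₗ (LinearMap.ker (p ∘ₗ f)).subtype).codRestrict _ (fun x => (hip _).1 x.2)
  let e := LinearEquiv.ofInjective i hi
  refine HasRes.horseshoe (a := fun k => b (k + 1)) j (e.symm.toLinearMap ∘ₗ r') ?_ ?_ ?_ hk hA
  · intro x y hxy
    have h1 : (j x).1 = (j y).1 := by rw [hxy]
    exact Subtype.ext h1
  · refine e.symm.surjective.comp ?_
    rintro ⟨_, y, rfl⟩
    obtain ⟨x, hx⟩ := hf (i y)
    exact ⟨⟨x, by rw [LinearMap.mem_ker, LinearMap.comp_apply, hx, hpi]⟩, Subtype.ext hx⟩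
  · intro x
    constructor
    · intro h
      have h1 : r' x = 0 := e.symm.injective (by rw [map_zero]; exact h)
      exact ⟨⟨x, congrArg Subtype.val h1⟩, rfl⟩
    · rintro ⟨y, rfl⟩
      have h1 : r' (j y) = 0 := Subtype.ext y.2
      rw [LinearMap.comp_apply, h1, map_zero]

lemma HasRes.seq {N : ℕ} {a : ℕ → ℕ} {M : Type} [AddCommGroup M] [Module R M]
    (h : HasRes R N a M) :
    ∃ (d : ∀ k, (Fin (a (k + 1)) → R) →ₗ[R] (Fin (a k) → R)) (f : (Fin (a 0) → R) →ₗ[R] M),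
      Function.Surjective f ∧ Function.Exact (d 0) f ∧ ∀ k, Function.Exact (d (k + 1)) (d k) := by
  induction N generalizing a M with
  | zero =>
    obtain ⟨h1, h2⟩ := h
    have : ∀ k, Subsingleton (Fin (a k) → R) := fun k => by rw [h2]; infer_instance
    refine ⟨fun k => 0, 0, fun x => ⟨0, Subsingleton.elim _ _⟩, fun x => ?_, fun k x => ?_⟩
    · exact ⟨fun _ => ⟨0, Subsingleton.elim _ _⟩, fun _ => rfl⟩
    · exact ⟨fun _ => ⟨0, Subsingleton.elim _ _⟩, fun _ => rfl⟩
  | succ N ih =>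
    obtain ⟨f, hf, hk⟩ := h
    obtain ⟨d, g, hg, h0, hs⟩ := ih hk
    refine ⟨fun k => match k with
      | 0 => (LinearMap.ker f).subtype ∘ₗ g
      | k + 1 => d k, f, hf, ?_, ?_⟩
    · intro x
      constructor
      · intro hx
        obtain ⟨y, hy⟩ := hg ⟨x, hx⟩
        exact ⟨y, congrArg Subtype.val hy⟩
      · rintro ⟨y, rfl⟩
        exact (g y).2
    · intro k
      cases k with
      | zero =>
        intro x
        rw [← h0 x]
        exact ⟨fun h => Subtype.ext h, fun h => congrArg Subtype.val h⟩
      | succ k => exact hs k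

lemma HasRes.res {N : ℕ} {a : ℕ → ℕ} {M : ModuleCat.{0} R}
    (h : HasRes R N a M) : ∃ P : ProjectiveResolution M,
      ∀ k : ℕ, Nonempty ((P.complex.X k) ≃ₗ[R] (Fin (a k) → R)) := by
  obtain ⟨d, f, hf, h0, hs⟩ := h.seq
  have sq : ∀ k, ModuleCat.ofHom (d (k + 1)) ≫ ModuleCat.ofHom (d k) = 0 := fun k => by
    rw [← ModuleCat.ofHom_comp, (hs k).linearMap_comp_eq_zero]; rfl
  let C := ChainComplex.of (fun k => ModuleCat.of R (Fin (a k) → R))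
    (fun k => ModuleCat.ofHom (d k)) sq
  let f' : C.X 0 ⟶ M := ModuleCat.ofHom f
  have hd : ∀ k, C.d (k + 1) k = ModuleCat.ofHom (d k) := fun k => ChainComplex.of_d
    (fun k => ModuleCat.of R (Fin (a k) → R)) (fun k => ModuleCat.ofHom (d k)) k
  have w : C.d 1 0 ≫ f' = 0 := by
    rw [hd 0]
    change ModuleCat.ofHom (d 0) ≫ ModuleCat.ofHom f = 0
    rw [← ModuleCat.ofHom_comp, h0.linearMap_comp_eq_zero]; rfl
  let π := (ChainComplex.toSingle₀Equiv C M).symm ⟨f', w⟩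
  have hπ : π.f 0 = f' := ChainComplex.toSingle₀Equiv_symm_apply_f_zero (C := C) (X := M) f' w
  refine ⟨{ complex := C, projective := ?_, π := π, quasiIso := ⟨fun n => ?_⟩ }, fun k => ⟨LinearEquiv.refl _ _⟩⟩
  · intro k
    change Projective (ModuleCat.of R (Fin (a k) → R))
    infer_instance
  · cases n with
    | zero =>
      rw [ChainComplex.quasiIsoAt₀_iff, ShortComplex.quasiIso_iff_of_zeros' _ rfl rfl rfl]
      constructor
      · rw [ShortComplex.ShortExact.moduleCat_exact_iff_function_exact]
        change Function.Exact (C.d 1 0).hom (π.f 0).hom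
        rw [hπ, hd]
        exact h0
      · change Epi (π.f 0)
        rw [hπ]
        exact (ModuleCat.epi_iff_surjective _).2 hf
    | succ k =>
      rw [quasiIsoAt_iff_exactAt' _ _ (ChainComplex.exactAt_succ_single_obj _ _)]
      rw [HomologicalComplex.exactAt_iff' _ (k + 1 + 1) (k + 1) k (by simp) (by simp)]
      rw [ShortComplex.ShortExact.moduleCat_exact_iff_function_exact]
      change Function.Exact (C.d (k + 1 + 1) (k + 1)).hom (C.d (k + 1) k).hom
      rw [hd, hd]
      exact hs k

end homological

section operators
set_option linter.unusedSimpArgs false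
variable {n : ℕ} {q : ℂ}

/-- index of `x_i` -/
abbrev ix (i : Fin n) : GenIdx n := Sum.inl i
/-- index of `y_i` -/
abbrev iy (i : Fin n) : GenIdx n := Sum.inr (Sum.inl i)
/-- index of `z_i` -/
abbrev iz (i : Fin n) : GenIdx n := Sum.inr (Sum.inr i)

/-- The polynomial model. -/
abbrev V (n : ℕ) := MvPolynomial (GenIdx n) ℂ

/-- monic monomial -/
def mm (e : GenIdx n →₀ ℕ) : V n := MvPolynomial.monomial e 1

/-- linear operator from values on monomials -/
def opOf {M : Type} [AddCommGroup M] [Module ℂ M] (F : (GenIdx n →₀ ℕ) → M) : V n →ₗ[ℂ] M :=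
  (MvPolynomial.basisMonomials (GenIdx n) ℂ).constr ℂ F

lemma opOf_mm {M : Type} [AddCommGroup M] [Module ℂ M] (F : (GenIdx n →₀ ℕ) → M)
    (e : GenIdx n →₀ ℕ) : opOf F (mm e) = F e := by
  have := (MvPolynomial.basisMonomials (GenIdx n) ℂ).constr_basis ℂ F e
  rwa [MvPolynomial.coe_basisMonomials] at this

lemma lin_ext {M : Type} [AddCommGroup M] [Module ℂ M] {f g : V n →ₗ[ℂ] M}
    (h : ∀ e, f (mm e) = g (mm e)) : f = g := by
  refine (MvPolynomial.basisMonomials (GenIdx n) ℂ).ext fun e => ?_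
  rw [MvPolynomial.coe_basisMonomials]
  exact h e

/-- the quantum integers -/
def qs (q : ℂ) : ℕ → ℂ
  | 0 => 0
  | a + 1 => q⁻¹ * qs q a + q ^ a

/-- action of `y_i` -/
def TY (i : Fin n) : V n →ₗ[ℂ] V n := opOf fun e => mm (e + Finsupp.single (iy i) 1)

/-- action of `z_i` -/
def TZ (q : ℂ) (i : Fin n) : V n →ₗ[ℂ] V n :=
  opOf fun e => (q ^ (e (iy i)) * q⁻¹ ^ (e (ix i))) • mm (e + Finsupp.single (iz i) 1)

/-- action of `x_i` -/
def TX (q : ℂ) (i : Fin n) : V n →ₗ[ℂ] V n :=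
  opOf fun e => (q⁻¹ ^ (e (iy i))) • mm (e + Finsupp.single (ix i) 1) +
    (qs q (e (iy i)) * q⁻¹ ^ (e (ix i))) •
      mm (e - Finsupp.single (iy i) 1 + Finsupp.single (iz i) 1)

lemma TY_mm (i : Fin n) (e) : TY i (mm e) = mm (e + Finsupp.single (iy i) 1) := opOf_mm _ _

lemma TZ_mm (i : Fin n) (e) : TZ q i (mm e) =
    (q ^ (e (iy i)) * q⁻¹ ^ (e (ix i))) • mm (e + Finsupp.single (iz i) 1) := opOf_mm _ _

lemma TX_mm (i : Fin n) (e) : TX q i (mm e) =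
    (q⁻¹ ^ (e (iy i))) • mm (e + Finsupp.single (ix i) 1) +
    (qs q (e (iy i)) * q⁻¹ ^ (e (ix i))) •
      mm (e - Finsupp.single (iy i) 1 + Finsupp.single (iz i) 1) := opOf_mm _ _

lemma TYY (i j : Fin n) : TY i * TY j = TY j * TY i := by
  refine lin_ext fun e => ?_
  simp only [Module.End.mul_apply, TY_mm, add_right_comm]

lemma TZZ (i j : Fin n) : TZ q i * TZ q j = TZ q j * TZ q i := by
  refine lin_ext fun e => ?_
  simp [Module.End.mul_apply, TZ_mm, smul_smul, add_right_comm e, mul_comm]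

lemma TYZ (i j : Fin n) (hij : i ≠ j) : TY i * TZ q j = TZ q j * TY i := by
  refine lin_ext fun e => ?_
  simp [Module.End.mul_apply, TZ_mm, TY_mm, smul_smul, add_right_comm e, Finsupp.single_apply, hij]

lemma TYZ' (hq : q ≠ 0) (i : Fin n) : TY i * TZ q i = q⁻¹ • (TZ q i * TY i) := by
  refine lin_ext fun e => ?_
  simp only [Module.End.mul_apply, TZ_mm, TY_mm, smul_smul, map_smul, LinearMap.smul_apply,
    add_right_comm e]
  congr 1
  simp [pow_succ]
  field_simp

lemma TXZ (i j : Fin n) (hij : i ≠ j) : TX q i * TZ q j = TZ q j * TX q i := by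
  refine lin_ext fun e => ?_
  simp [Module.End.mul_apply, TZ_mm, TX_mm, smul_smul, add_right_comm e, Finsupp.single_apply, hij,
    hij.symm]
  congr 1
  · congr 1; ring
  · congr 1
    · ring
    · congr 1; ext g; rcases g with g | g | g <;> simp [Finsupp.single_apply] <;> grind

lemma TXZ' (hq : q ≠ 0) (i : Fin n) : TX q i * TZ q i = q • (TZ q i * TX q i) := by
  refine lin_ext fun e => ?_
  simp [Module.End.mul_apply, TZ_mm, TX_mm, smul_smul, add_right_comm e, Finsupp.single_apply]
  rcases Nat.eq_zero_or_pos (e (iy i)) with h | h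
  · simp [h, qs]
    congr 1
    rw [pow_succ]
    field_simp
  obtain ⟨a, ha⟩ := Nat.exists_eq_add_of_lt h
  simp only [zero_add] at ha
  congr 1
  · congr 1; rw [pow_succ]; field_simp
  · congr 1
    · simp only [ha, Nat.add_sub_cancel, inv_pow, pow_succ]; field_simp
    · congr 1; ext g; rcases g with g | g | g <;> simp [Finsupp.single_apply] <;> grind

lemma TXY (i j : Fin n) (hij : i ≠ j) : TX q i * TY j = TY j * TX q i := by
  refine lin_ext fun e => ?_
  simp [Module.End.mul_apply, TY_mm, TX_mm, smul_smul, add_right_comm e, Finsupp.single_apply, hij,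
    hij.symm]
  congr 2
  ext g; rcases g with g | g | g <;> simp [Finsupp.single_apply] <;> grind

lemma TXY' (hq : q ≠ 0) (i : Fin n) : TX q i * TY i = q⁻¹ • (TY i * TX q i) + TZ q i := by
  refine lin_ext fun e => ?_
  simp [Module.End.mul_apply, TY_mm, TX_mm, TZ_mm, smul_smul, add_right_comm e,
    Finsupp.single_apply, qs]
  rcases Nat.eq_zero_or_pos (e (iy i)) with h | h
  · simp [h, qs]
  have h1 : e - Finsupp.single (iy i) 1 + Finsupp.single (iz i) 1 + Finsupp.single (iy i) 1 =
    e + Finsupp.single (iz i) 1 := by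
    ext g; rcases g with g | g | g <;> simp [Finsupp.single_apply] <;> grind
  rw [h1, add_assoc (_ • _), ← add_smul]
  congr 1
  · congr 1; ring
  · congr 1; ring

lemma TXX (i j : Fin n) : TX q i * TX q j = TX q j * TX q i := by
  by_cases hij : i = j
  · rw [hij]
  refine lin_ext fun e => ?_
  have hji : ¬ j = i := fun h => hij h.symm
  simp [Module.End.mul_apply, TX_mm, smul_smul, add_right_comm e, Finsupp.single_apply, hij,
    hji]
  rw [add_add_add_comm]
  have h1 : ∀ i j : Fin n, e + Finsupp.single (ix j) 1 - Finsupp.single (iy i) 1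
      + Finsupp.single (iz i) 1 =
     e - Finsupp.single (iy i) 1 + Finsupp.single (iz i) 1 + Finsupp.single (ix j) 1 := by
    intro i j
    ext g; rcases g with g | g | g <;> simp [Finsupp.single_apply] <;> grind
  have h2 : e - Finsupp.single (iy i) 1 + Finsupp.single (iz i) 1 - Finsupp.single (iy j) 1 +
      Finsupp.single (iz j) 1 =
      e - Finsupp.single (iy j) 1 + Finsupp.single (iz j) 1 - Finsupp.single (iy i) 1 +
      Finsupp.single (iz i) 1 := by
    ext g; rcases g with g | g | g <;> simp [Finsupp.single_apply] <;> grind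
  rw [h1, h1, h2]
  simp only [mul_comm, mul_left_comm]

/-- generators act on the polynomial model -/
def Tgen (n : ℕ) (q : ℂ) : GenIdx n → Module.End ℂ (V n)
  | Sum.inl i => TX q i
  | Sum.inr (Sum.inl i) => TY i
  | Sum.inr (Sum.inr i) => TZ q i

end operators

section model
set_option linter.unusedSimpArgs false
variable {n : ℕ} {q : ℂ}

/-- the representation on the polynomial model -/
def rho (n : ℕ) (q : ℂ) [NeZero q] : H n q →ₐ[ℂ] Module.End ℂ (V n) :=
  RingQuot.liftAlgHom ℂ ⟨FreeAlgebra.lift ℂ (Tgen n q), by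
    have hq : q ≠ 0 := NeZero.ne q
    intro a b h
    induction h with
    | xx i j => simp [fX, Tgen, TXX i j]
    | yy i j => simp [fY, Tgen, TYY i j]
    | zz i j => simp [fZ, Tgen, TZZ i j]
    | xz i => simp [fX, fZ, Tgen, TXZ' hq i]
    | yz i => simp [fY, fZ, Tgen, TYZ' hq i]
    | xy i => simp [fX, fY, fZ, Tgen, TXY' hq i]
    | xyne i j h => simp [fX, fY, Tgen, TXY i j h]
    | xzne i j h => simp [fX, fZ, Tgen, TXZ i j h]
    | yzne i j h => simp [fY, fZ, Tgen, TYZ i j h]⟩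

lemma rho_X [NeZero q] (i : Fin n) : rho n q (X n q i) = TX q i := by
  simp [rho, X, fX, Tgen]
lemma rho_Y [NeZero q] (i : Fin n) : rho n q (Y n q i) = TY i := by
  simp [rho, Y, fY, Tgen]
lemma rho_Z [NeZero q] (i : Fin n) : rho n q (Z n q i) = TZ q i := by
  simp [rho, Z, fZ, Tgen]

lemma H_induction {P : H n q → Prop} (hc : ∀ c : ℂ, P (algebraMap ℂ (H n q) c))
    (hX : ∀ i, P (X n q i)) (hY : ∀ i, P (Y n q i)) (hZ : ∀ i, P (Z n q i))
    (hm : ∀ a b, P a → P b → P (a * b)) (ha : ∀ a b, P a → P b → P (a + b)) (r : H n q) : P r := by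
  obtain ⟨w, rfl⟩ := RingQuot.mkAlgHom_surjective ℂ (Rel n q) r
  induction w using FreeAlgebra.induction with
  | grade0 c => rw [AlgHom.commutes]; exact hc c
  | grade1 g =>
    rcases g with g | g | g
    · exact hX g
    · exact hY g
    · exact hZ g
  | mul a b h1 h2 => rw [map_mul]; exact hm _ _ h1 h2
  | add a b h1 h2 => rw [map_add]; exact ha _ _ h1 h2

instance instModV [NeZero q] : Module (H n q) (V n) :=
  Module.compHom (V n) (rho n q).toRingHom

lemma smul_V [NeZero q] (r : H n q) (v : V n) : r • v = rho n q r v := rfl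

lemma rXX (i j : Fin n) : X n q i * X n q j = X n q j * X n q i := by
  simpa [X] using RingQuot.mkAlgHom_rel ℂ (Rel.xx (q := q) i j)
lemma rYY (i j : Fin n) : Y n q i * Y n q j = Y n q j * Y n q i := by
  simpa [Y] using RingQuot.mkAlgHom_rel ℂ (Rel.yy (q := q) i j)
lemma rZZ (i j : Fin n) : Z n q i * Z n q j = Z n q j * Z n q i := by
  simpa [Z] using RingQuot.mkAlgHom_rel ℂ (Rel.zz (q := q) i j)
lemma rXZ (i : Fin n) : X n q i * Z n q i = q • (Z n q i * X n q i) := by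
  simpa [X, Z] using RingQuot.mkAlgHom_rel ℂ (Rel.xz (q := q) i)
lemma rYZ (i : Fin n) : Y n q i * Z n q i = q⁻¹ • (Z n q i * Y n q i) := by
  simpa [Y, Z] using RingQuot.mkAlgHom_rel ℂ (Rel.yz (q := q) i)
lemma rXY (i : Fin n) : X n q i * Y n q i = q⁻¹ • (Y n q i * X n q i) + Z n q i := by
  simpa [Y, Z, X] using RingQuot.mkAlgHom_rel ℂ (Rel.xy (q := q) i)
lemma rXYne {i j : Fin n} (h : i ≠ j) : X n q i * Y n q j = Y n q j * X n q i := by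
  simpa [Y, Z, X] using RingQuot.mkAlgHom_rel ℂ (Rel.xyne (q := q) i j h)
lemma rXZne {i j : Fin n} (h : i ≠ j) : X n q i * Z n q j = Z n q j * X n q i := by
  simpa [Y, Z, X] using RingQuot.mkAlgHom_rel ℂ (Rel.xzne (q := q) i j h)
lemma rYZne {i j : Fin n} (h : i ≠ j) : Y n q i * Z n q j = Z n q j * Y n q i := by
  simpa [Y, Z, X] using RingQuot.mkAlgHom_rel ℂ (Rel.yzne (q := q) i j h)

section mon
variable {A : Type} [Ring A] [Algebra ℂ A] (u : Fin n → A) (hu : ∀ i j, u i * u j = u j * u i)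

/-- monomials in a commuting family -/
def mon (a : Fin n → ℕ) : A :=
  MonoidHom.noncommPiCoprod (fun i => powersHom A (u i))
    (fun i j _ x y => by
      simp only [powersHom_apply]
      exact Commute.pow_pow (hu i j) _ _) (fun i => Multiplicative.ofAdd (a i))

lemma mon_zero : mon u hu 0 = 1 := map_one _

lemma mon_add (a b : Fin n → ℕ) : mon u hu (a + b) = mon u hu a * mon u hu b := map_mul _ _ _

lemma mon_single (i : Fin n) : mon u hu (Pi.single i 1) = u i := by
  have h := MonoidHom.noncommPiCoprod_mulSingle (ϕ := fun i => powersHom A (u i))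
    (hcomm := fun i j _ x y => by
      simp only [powersHom_apply]
      exact Commute.pow_pow (hu i j) _ _) i (Multiplicative.ofAdd 1)
  rw [powersHom_apply] at h
  simp only [toAdd_ofAdd, pow_one] at h
  rw [← h, mon]
  rfl

lemma mon_succ (a : Fin n → ℕ) (i : Fin n) : mon u hu (a + Pi.single i 1) = mon u hu a * u i := by
  rw [mon_add, mon_single]

lemma mon_succ' (a : Fin n → ℕ) (i : Fin n) : mon u hu (a + Pi.single i 1) = u i * mon u hu a := by
  rw [add_comm, mon_add, mon_single]

lemma fun_ind {P : (Fin n → ℕ) → Prop} (h0 : P 0) (hs : ∀ a j, P a → P (a + Pi.single j 1))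
    (a : Fin n → ℕ) : P a := by
  induction hN : ∑ i, a i generalizing a with
  | zero =>
    have : a = 0 := by
      funext i
      simpa using (Finset.sum_eq_zero_iff.1 hN) i (Finset.mem_univ i)
    rw [this]; exact h0
  | succ N ih =>
    have : ∃ i, a i ≠ 0 := by
      by_contra h
      push Not at h
      simp [h] at hN
    obtain ⟨i, hi⟩ := this
    have h2 : a = (a - Pi.single i 1) + Pi.single i 1 := by
      funext j
      by_cases hj : j = i
      · subst hj; simp; omega
      · simp [hj]
    rw [h2]
    apply hs
    apply ih
    rw [h2] at hN
    simp only [Pi.add_apply, Finset.sum_add_distrib] at hN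
    have h3 : ∑ x, (Pi.single i 1 : Fin n → ℕ) x = 1 := by simp
    omega

lemma mon_qcomm {w : A} {c : ℂ} {i : Fin n} (hi : w * u i = c • (u i * w))
    (hj : ∀ j, j ≠ i → w * u j = u j * w) (a : Fin n → ℕ) :
    w * mon u hu a = c ^ (a i) • (mon u hu a * w) := by
  induction a using fun_ind with
  | h0 => simp [mon_zero]
  | hs a j ih =>
    rw [mon_succ, ← mul_assoc, ih, smul_mul_assoc, mul_assoc]
    by_cases h : j = i
    · subst h
      rw [hi]
      simp [pow_succ, smul_smul, mul_assoc]
    · rw [hj j h]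
      simp [h, Ne.symm h, mul_assoc]

end mon

/-- y-monomials -/
def MY (n : ℕ) (q : ℂ) (a : Fin n → ℕ) : H n q := mon (Y n q) rYY a
/-- x-monomials -/
def MX (n : ℕ) (q : ℂ) (a : Fin n → ℕ) : H n q := mon (X n q) rXX a
/-- z-monomials -/
def MZ (n : ℕ) (q : ℂ) (a : Fin n → ℕ) : H n q := mon (Z n q) rZZ a

lemma Z_MY (hq : q ≠ 0) (i : Fin n) (a : Fin n → ℕ) :
    Z n q i * MY n q a = q ^ (a i) • (MY n q a * Z n q i) :=
  mon_qcomm _ _ (by rw [rYZ, smul_smul, mul_inv_cancel₀ hq, one_smul])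
    (fun j hj => (rYZne hj).symm) a

lemma Z_MX (hq : q ≠ 0) (i : Fin n) (a : Fin n → ℕ) :
    Z n q i * MX n q a = q⁻¹ ^ (a i) • (MX n q a * Z n q i) :=
  mon_qcomm _ _ (by rw [rXZ, smul_smul, inv_mul_cancel₀ hq, one_smul])
    (fun j hj => (rXZne hj).symm) a

lemma X_MY (hq : q ≠ 0) (i : Fin n) (a : Fin n → ℕ) :
    X n q i * MY n q a = q⁻¹ ^ (a i) • (MY n q a * X n q i) +
      qs q (a i) • (MY n q (a - Pi.single i 1) * Z n q i) := by
  induction a using fun_ind with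
  | h0 => simp [MY, mon_zero, qs]
  | hs a j ih =>
    have hY : ∀ a, MY n q (a + Pi.single j 1) = Y n q j * MY n q a := fun a => mon_succ' _ _ a j
    rw [hY, ← mul_assoc]
    by_cases h : j = i
    · subst h
      rw [rXY, add_mul, smul_mul_assoc, mul_assoc, ih, Z_MY hq]
      have h1 : a + Pi.single j 1 - Pi.single j 1 = a := by
        funext k; simp
      rw [h1]
      rcases Nat.eq_zero_or_pos (a j) with h0 | h0
      · simp [h0, qs, mul_assoc]
      · have h2 : Y n q j * MY n q (a - Pi.single j 1) = MY n q a := by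
          rw [← hY]
          congr 1
          funext k
          by_cases hk : k = j
          · subst hk; simp; omega
          · simp [hk]
        simp only [mul_add, mul_smul_comm, smul_add, ← mul_assoc, h2, Pi.add_apply,
          Pi.single_eq_same, qs, add_smul, smul_smul, pow_succ, mul_comm q⁻¹]
        abel
    · rw [rXYne (Ne.symm h), mul_assoc, ih]
      have h2 : MY n q (a + Pi.single j 1 - Pi.single i 1) =
          Y n q j * MY n q (a - Pi.single i 1) := by
        rw [← hY]
        congr 1
        funext k
        by_cases hk : k = j
        · subst hk; simp [h]
        · simp [hk]
      rw [h2]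
      simp [Ne.symm h, mul_add, mul_assoc]

/-- the exponent function along an index family -/
def ex (f : Fin n → GenIdx n) (e : GenIdx n →₀ ℕ) : Fin n → ℕ := fun i => e (f i)

/-- the ordered monomial -/
def PM (n : ℕ) (q : ℂ) (e : GenIdx n →₀ ℕ) : H n q :=
  MY n q (ex iy e) * MX n q (ex ix e) * MZ n q (ex iz e)

/-- PBW map -/
def phi (n : ℕ) (q : ℂ) : V n →ₗ[ℂ] H n q := opOf (PM n q)

lemma phi_mm (e) : phi n q (mm e) = PM n q e := opOf_mm _ _

lemma ex_self {f : Fin n → GenIdx n} (hf : Function.Injective f) (e : GenIdx n →₀ ℕ) (i : Fin n) :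
    ex f (e + Finsupp.single (f i) 1) = ex f e + Pi.single i 1 := by
  funext k
  by_cases h : k = i
  · subst h; simp [ex]
  · have : f k ≠ f i := fun h' => h (hf h')
    simp [ex, h, Finsupp.single_apply, this.symm]

lemma ex_other {f : Fin n → GenIdx n} {g : GenIdx n} (hf : ∀ k, f k ≠ g) (e : GenIdx n →₀ ℕ) :
    ex f (e + Finsupp.single g 1) = ex f e := by
  funext k
  simp [ex, Finsupp.single_apply, (hf k).symm]

lemma ex_sub_self {f : Fin n → GenIdx n} (hf : Function.Injective f) (e : GenIdx n →₀ ℕ)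
    (i : Fin n) :
    ex f (e - Finsupp.single (f i) 1) = ex f e - Pi.single i 1 := by
  funext k
  by_cases h : k = i
  · subst h; simp [ex]
  · have : f k ≠ f i := fun h' => h (hf h')
    simp [ex, h, Finsupp.single_apply, this.symm]

lemma ex_sub_other {f : Fin n → GenIdx n} {g : GenIdx n} (hf : ∀ k, f k ≠ g)
    (e : GenIdx n →₀ ℕ) :
    ex f (e - Finsupp.single g 1) = ex f e := by
  funext k
  simp [ex, Finsupp.single_apply, (hf k).symm]

lemma ix_inj : Function.Injective (ix (n := n)) := fun a b h => by simpa using h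
lemma iy_inj : Function.Injective (iy (n := n)) := fun a b h => by simpa using h
lemma iz_inj : Function.Injective (iz (n := n)) := fun a b h => by simpa using h

lemma phi_TY (i : Fin n) (v : V n) : phi n q (TY i v) = Y n q i * phi n q v := by
  have : phi n q ∘ₗ TY i = LinearMap.mulLeft ℂ (Y n q i) ∘ₗ phi n q := by
    refine lin_ext fun e => ?_
    simp only [LinearMap.comp_apply, TY_mm, phi_mm, LinearMap.mulLeft_apply, PM]
    rw [ex_self iy_inj, ex_other (by simp), ex_other (by simp)]
    have hY : MY n q (ex iy e + Pi.single i 1) = Y n q i * MY n q (ex iy e) := mon_succ' _ _ _ i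
    rw [hY]
    simp only [mul_assoc]
  exact LinearMap.congr_fun this v

lemma phi_TZ (hq : q ≠ 0) (i : Fin n) (v : V n) : phi n q (TZ q i v) = Z n q i * phi n q v := by
  have : phi n q ∘ₗ TZ q i = LinearMap.mulLeft ℂ (Z n q i) ∘ₗ phi n q := by
    refine lin_ext fun e => ?_
    simp only [LinearMap.comp_apply, TZ_mm, phi_mm, LinearMap.mulLeft_apply, PM, map_smul]
    rw [ex_self iz_inj, ex_other (by simp), ex_other (by simp)]
    have hZ : MZ n q (ex iz e + Pi.single i 1) = Z n q i * MZ n q (ex iz e) := mon_succ' _ _ _ i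
    rw [hZ, ← mul_assoc (Z n q i), ← mul_assoc (Z n q i), Z_MY hq, smul_mul_assoc, mul_assoc (MY n q _) (Z n q i),
      Z_MX hq]
    simp only [mul_assoc, smul_mul_assoc, mul_smul_comm, smul_smul]
    rfl
  exact LinearMap.congr_fun this v

lemma phi_TX (hq : q ≠ 0) (i : Fin n) (v : V n) : phi n q (TX q i v) = X n q i * phi n q v := by
  have : phi n q ∘ₗ TX q i = LinearMap.mulLeft ℂ (X n q i) ∘ₗ phi n q := by
    refine lin_ext fun e => ?_
    simp only [LinearMap.comp_apply, TX_mm, phi_mm, LinearMap.mulLeft_apply, PM, map_smul, map_add]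
    rw [ex_self ix_inj, ex_other (by simp), ex_other (by simp)]
    rw [ex_self iz_inj, ex_other (f := ix) (by simp), ex_other (f := iy) (by simp),
      ex_sub_self iy_inj, ex_sub_other (by simp), ex_sub_other (by simp)]
    have hZ : MZ n q (ex iz e + Pi.single i 1) = Z n q i * MZ n q (ex iz e) := mon_succ' _ _ _ i
    have hX : MX n q (ex ix e + Pi.single i 1) = X n q i * MX n q (ex ix e) := mon_succ' _ _ _ i
    rw [hZ, hX, ← mul_assoc (X n q i), ← mul_assoc (X n q i), X_MY hq, add_mul, add_mul]
    simp only [smul_mul_assoc, mul_assoc]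
    rw [← mul_assoc (Z n q i) (MX n q _), Z_MX hq]
    simp only [mul_assoc, smul_mul_assoc, mul_smul_comm, smul_smul]
    rfl
  exact LinearMap.congr_fun this v

lemma phi_smul [NeZero q] (r : H n q) (v : V n) : phi n q (r • v) = r * phi n q v := by
  have hq : q ≠ 0 := NeZero.ne q
  induction r using H_induction generalizing v with
  | hc c =>
    rw [smul_V, AlgHom.commutes, Module.algebraMap_end_apply, map_smul, Algebra.smul_def]
  | hX i => rw [smul_V, rho_X, phi_TX hq]
  | hY i => rw [smul_V, rho_Y, phi_TY]
  | hZ i => rw [smul_V, rho_Z, phi_TZ hq]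
  | hm a b h1 h2 => rw [mul_smul, h1, h2, mul_assoc]
  | ha a b h1 h2 => rw [add_smul, map_add, h1, h2, add_mul]

lemma phi_one : phi n q (mm 0) = 1 := by
  rw [phi_mm]
  have h : ∀ f : Fin n → GenIdx n, ex f 0 = 0 := fun f => rfl
  simp [PM, h, MY, MX, MZ, mon_zero]

lemma cyc_mm [NeZero q] (e : GenIdx n →₀ ℕ) : ∃ r : H n q, r • (mm 0 : V n) = mm e := by
  induction hN : e.degree generalizing e with
  | zero =>
    rw [Finsupp.degree_eq_zero_iff] at hN
    exact ⟨1, by rw [one_smul, hN]⟩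
  | succ N ih =>
    have key : ∀ g, e g ≠ 0 → ∃ e', e = e' + Finsupp.single g 1 ∧ e'.degree = N := by
      intro g hg
      have h1 : e = (e - Finsupp.single g 1) + Finsupp.single g 1 := by
        rw [tsub_add_cancel_of_le]
        simpa using Nat.one_le_iff_ne_zero.2 hg
      refine ⟨_, h1, ?_⟩
      rw [h1, map_add, Finsupp.degree_single] at hN
      omega
    by_cases hy : ∃ i, e (iy i) ≠ 0
    · obtain ⟨i, hi⟩ := hy
      obtain ⟨e', rfl, h⟩ := key _ hi
      obtain ⟨r, hr⟩ := ih e' h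
      exact ⟨Y n q i * r, by rw [mul_smul, hr, smul_V, rho_Y, TY_mm]⟩
    push Not at hy
    by_cases hx : ∃ i, e (ix i) ≠ 0
    · obtain ⟨i, hi⟩ := hx
      obtain ⟨e', rfl, h⟩ := key _ hi
      obtain ⟨r, hr⟩ := ih e' h
      have h0 : e' (iy i) = 0 := by simpa using hy i
      exact ⟨X n q i * r, by rw [mul_smul, hr, smul_V, rho_X, TX_mm, h0]; simp [qs]⟩
    push Not at hx
    by_cases hz : ∃ i, e (iz i) ≠ 0
    · obtain ⟨i, hi⟩ := hz
      obtain ⟨e', rfl, h⟩ := key _ hi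
      obtain ⟨r, hr⟩ := ih e' h
      have h0 : e' (iy i) = 0 := by simpa using hy i
      have h1 : e' (ix i) = 0 := by simpa using hx i
      exact ⟨Z n q i * r, by rw [mul_smul, hr, smul_V, rho_Z, TZ_mm, h0, h1]; simp⟩
    push Not at hz
    have : e = 0 := by
      ext g
      rcases g with g | g | g
      · exact hx g
      · exact hy g
      · exact hz g
    simp [this] at hN

lemma cyc [NeZero q] (v : V n) : ∃ r : H n q, r • (mm 0 : V n) = v := by
  let ψ : H n q →ₗ[ℂ] V n := LinearMap.applyₗ (mm 0 : V n) ∘ₗ (rho n q).toLinearMap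
  have hψ : ∀ r, ψ r = r • (mm 0 : V n) := fun r => rfl
  have : LinearMap.range ψ = ⊤ := by
    rw [eq_top_iff, ← (MvPolynomial.basisMonomials (GenIdx n) ℂ).span_eq, Submodule.span_le]
    rintro _ ⟨e, rfl⟩
    obtain ⟨r, hr⟩ := cyc_mm (q := q) e
    refine ⟨r, ?_⟩
    rw [hψ, hr, MvPolynomial.coe_basisMonomials]
    rfl
  obtain ⟨r, hr⟩ := LinearMap.range_eq_top.1 this v
  exact ⟨r, hr⟩

/-- The polynomial model is free of rank one. -/
def phiEquiv (n : ℕ) (q : ℂ) [NeZero q] : V n ≃ₗ[H n q] H n q :=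
  LinearEquiv.ofBijective
    ({ toFun := phi n q, map_add' := map_add _, map_smul' := phi_smul } : V n →ₗ[H n q] H n q)
    ⟨by
      rw [← LinearMap.ker_eq_bot, LinearMap.ker_eq_bot']
      intro v hv
      obtain ⟨r, rfl⟩ := cyc (q := q) v
      have h : phi n q (r • (mm 0 : V n)) = 0 := hv
      rw [phi_smul, phi_one, mul_one] at h
      rw [h, zero_smul], fun r => ⟨r • (mm 0 : V n), by
      change phi n q (r • (mm 0 : V n)) = r
      rw [phi_smul, phi_one, mul_one]⟩⟩

end model

section filtration
set_option linter.unusedSimpArgs false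
variable {n : ℕ} {q : ℂ}

/-- the ideal generated by a set of variables -/
def IS (S : Set (GenIdx n)) : Ideal (V n) := Ideal.span (MvPolynomial.X '' S)

lemma mem_IS {S : Set (GenIdx n)} {p : V n} :
    p ∈ IS S ↔ ∀ m ∈ p.support, ∃ g ∈ S, m g ≠ 0 := MvPolynomial.mem_ideal_span_X_image

lemma mm_mem {S : Set (GenIdx n)} {e : GenIdx n →₀ ℕ} (g : GenIdx n) (hg : g ∈ S)
    (he : e g ≠ 0) : mm e ∈ IS S := by
  rw [mem_IS]
  intro m hm
  have : m = e := by
    by_contra h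
    rw [MvPolynomial.mem_support_iff, mm, MvPolynomial.coeff_monomial, if_neg (Ne.symm h)] at hm
    exact hm rfl
  rw [this]
  exact ⟨g, hg, he⟩

lemma smul_mem_IS {S : Set (GenIdx n)} (c : ℂ) {p : V n} (hp : p ∈ IS S) : c • p ∈ IS S := by
  rw [MvPolynomial.smul_eq_C_mul]
  exact Ideal.mul_mem_left _ _ hp

lemma eq_sum_mm (p : V n) : p = ∑ e ∈ p.support, p.coeff e • mm e := by
  conv_lhs => rw [p.as_sum]
  refine Finset.sum_congr rfl fun e _ => ?_
  rw [mm, MvPolynomial.smul_monomial, smul_eq_mul, mul_one]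

lemma lin_mem {S : Set (GenIdx n)} (T : V n →ₗ[ℂ] V n)
    (h : ∀ e : GenIdx n →₀ ℕ, (∃ g ∈ S, e g ≠ 0) → T (mm e) ∈ IS S) {p : V n} (hp : p ∈ IS S) :
    T p ∈ IS S := by
  rw [eq_sum_mm p, map_sum]
  refine Ideal.sum_mem _ fun e he => ?_
  rw [map_smul]
  exact smul_mem_IS _ (h e (mem_IS.1 hp e he))

lemma lin_mem' {S : Set (GenIdx n)} (T : V n →ₗ[ℂ] V n)
    (h : ∀ e : GenIdx n →₀ ℕ, T (mm e) ∈ IS S) (p : V n) :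
    T p ∈ IS S := by
  rw [eq_sum_mm p, map_sum]
  refine Ideal.sum_mem _ fun e he => ?_
  rw [map_smul]
  exact smul_mem_IS _ (h e)

/-- sets of variables generating a stable ideal -/
def Stable (S : Set (GenIdx n)) : Prop := ∀ i : Fin n, iy i ∈ S → iz i ∈ S

lemma smul_mem_W [NeZero q] {S : Set (GenIdx n)} (hS : Stable S) (r : H n q) {p : V n}
    (hp : p ∈ IS S) : r • p ∈ IS S := by
  have hadd : ∀ (e : GenIdx n →₀ ℕ) (g' : GenIdx n), (∃ g ∈ S, e g ≠ 0) →
      mm (e + Finsupp.single g' 1) ∈ IS S := by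
    rintro e g' ⟨g, hg, he⟩
    exact mm_mem g hg (by simp [he])
  induction r using H_induction generalizing p with
  | hc c =>
    rw [smul_V, AlgHom.commutes, Module.algebraMap_end_apply]
    exact smul_mem_IS _ hp
  | hX i =>
    rw [smul_V, rho_X]
    refine lin_mem _ (fun e he => ?_) hp
    rw [TX_mm]
    refine Ideal.add_mem _ (smul_mem_IS _ (hadd _ _ he)) (smul_mem_IS _ ?_)
    obtain ⟨g, hg, he⟩ := he
    by_cases h : g = iy i
    · subst h
      exact mm_mem (iz i) (hS i hg) (by simp)
    · exact mm_mem g hg (by simp [Finsupp.single_apply, Ne.symm h, he])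
  | hY i =>
    rw [smul_V, rho_Y]
    refine lin_mem _ (fun e he => ?_) hp
    rw [TY_mm]
    exact hadd _ _ he
  | hZ i =>
    rw [smul_V, rho_Z]
    refine lin_mem _ (fun e he => ?_) hp
    rw [TZ_mm]
    exact smul_mem_IS _ (hadd _ _ he)
  | hm a b h1 h2 => rw [mul_smul]; exact h1 (h2 hp)
  | ha a b h1 h2 => rw [add_smul]; exact Ideal.add_mem _ (h1 hp) (h2 hp)

/-- the stable ideal as a submodule over the q-Heisenberg algebra -/
def W (q : ℂ) [NeZero q] (S : Set (GenIdx n)) (hS : Stable S) : Submodule (H n q) (V n) where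
  carrier := IS S
  add_mem' := fun h1 h2 => Ideal.add_mem _ h1 h2
  zero_mem' := Ideal.zero_mem _
  smul_mem' := fun r _ hp => smul_mem_W hS r hp

lemma mem_W [NeZero q] {S : Set (GenIdx n)} {hS : Stable S} {p : V n} :
    p ∈ W q S hS ↔ p ∈ IS S := Iff.rfl

/-- `g` may be added to `S` -/
def Good (S : Set (GenIdx n)) (g : GenIdx n) : Prop :=
  g ∉ S ∧ ((∃ j, g = iz j) ∨ ((∃ j, g = ix j) ∧ ∀ i, iz i ∈ S) ∨
    ((∃ j, g = iy j) ∧ (∀ i, iz i ∈ S) ∧ ∀ i, ix i ∈ S))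

lemma X_mul_mm (g : GenIdx n) (e : GenIdx n →₀ ℕ) :
    (MvPolynomial.X g : V n) * mm e = mm (e + Finsupp.single g 1) := by
  rw [MvPolynomial.X, mm, mm, MvPolynomial.monomial_mul, one_mul, add_comm]

lemma comm_gen {S : Set (GenIdx n)} {g : GenIdx n} (T : V n →ₗ[ℂ] V n)
    (h : ∀ e, (MvPolynomial.X g : V n) * T (mm e) - T (mm (e + Finsupp.single g 1)) ∈ IS S)
    (p : V n) : (MvPolynomial.X g : V n) * T p - T (MvPolynomial.X g * p) ∈ IS S := by
  refine lin_mem' (LinearMap.mulLeft ℂ (MvPolynomial.X g : V n) ∘ₗ T -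
    T ∘ₗ LinearMap.mulLeft ℂ (MvPolynomial.X g : V n)) (fun e => ?_) p
  simp only [LinearMap.sub_apply, LinearMap.comp_apply, LinearMap.mulLeft_apply, X_mul_mm]
  exact h e

lemma comm_mem [NeZero q] {S : Set (GenIdx n)} (hS : Stable S) {g : GenIdx n} (hg : Good S g)
    (r : H n q) (p : V n) :
    (MvPolynomial.X g : V n) * (r • p) - r • (MvPolynomial.X g * p : V n) ∈ IS S := by
  induction r using H_induction generalizing p with
  | hc c =>
    simp only [smul_V, AlgHom.commutes, Module.algebraMap_end_apply]
    rw [mul_smul_comm, sub_self]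
    exact Ideal.zero_mem _
  | hX i =>
    simp only [smul_V, rho_X]
    refine comm_gen _ (fun e => ?_) p
    rw [TX_mm, TX_mm, mul_add, mul_smul_comm, mul_smul_comm, X_mul_mm, X_mul_mm]
    obtain ⟨-, ⟨j, rfl⟩ | ⟨⟨j, rfl⟩, hz⟩ | ⟨⟨j, rfl⟩, hz, hx⟩⟩ := hg
    · convert Ideal.zero_mem _
      rw [sub_eq_zero, add_right_comm e]
      congr 1
      · simp
      · congr 1
        · simp
        · congr 1
          ext g; rcases g with g | g | g <;> simp [Finsupp.single_apply, add_right_comm]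
    · rw [add_sub_add_comm]
      refine Ideal.add_mem _ ?_ (Ideal.sub_mem _ (smul_mem_IS _ ?_) (smul_mem_IS _ ?_))
      · convert Ideal.zero_mem _
        rw [sub_eq_zero, add_right_comm e]
        simp
      · exact mm_mem (iz i) (hz i) (by simp)
      · exact mm_mem (iz i) (hz i) (by simp)
    · refine Ideal.sub_mem _ (Ideal.add_mem _ (smul_mem_IS _ ?_) (smul_mem_IS _ ?_))
        (Ideal.add_mem _ (smul_mem_IS _ ?_) (smul_mem_IS _ ?_))
      · exact mm_mem (ix i) (hx i) (by simp)
      · exact mm_mem (iz i) (hz i) (by simp)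
      · exact mm_mem (ix i) (hx i) (by simp)
      · exact mm_mem (iz i) (hz i) (by simp)
  | hY i =>
    simp only [smul_V, rho_Y]
    refine comm_gen _ (fun e => ?_) p
    rw [TY_mm, TY_mm, X_mul_mm, add_right_comm, sub_self]
    exact Ideal.zero_mem _
  | hZ i =>
    simp only [smul_V, rho_Z]
    refine comm_gen _ (fun e => ?_) p
    rw [TZ_mm, TZ_mm, mul_smul_comm, X_mul_mm]
    have key : (∀ i, iz i ∈ S) → (q ^ e (iy i) * q⁻¹ ^ e (ix i)) • mm (e + Finsupp.single (iz i) 1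
        + Finsupp.single g 1) - (q ^ (e + Finsupp.single g 1 : GenIdx n →₀ ℕ) (iy i) *
        q⁻¹ ^ (e + Finsupp.single g 1 : GenIdx n →₀ ℕ) (ix i)) •
        mm (e + Finsupp.single g 1 + Finsupp.single (iz i) 1) ∈ IS S := fun hz =>
      Ideal.sub_mem _ (smul_mem_IS _ (mm_mem (iz i) (hz i) (by simp)))
        (smul_mem_IS _ (mm_mem (iz i) (hz i) (by simp)))
    obtain ⟨-, ⟨j, rfl⟩ | ⟨⟨j, rfl⟩, hz⟩ | ⟨⟨j, rfl⟩, hz, hx⟩⟩ := hg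
    · convert Ideal.zero_mem _
      rw [sub_eq_zero, add_right_comm e]
      simp
    · exact key hz
    · exact key hz
  | hm a b h1 h2 =>
    rw [mul_smul, mul_smul]
    have h3 := Ideal.add_mem _ (h1 (b • p)) (smul_mem_W hS a (h2 p))
    rwa [smul_sub, sub_add_sub_cancel] at h3
  | ha a b h1 h2 =>
    rw [add_smul, add_smul, mul_add, add_sub_add_comm]
    exact Ideal.add_mem _ (h1 p) (h2 p)

lemma X_regular {S : Set (GenIdx n)} {g : GenIdx n} (hg : g ∉ S) {p : V n}
    (h : (MvPolynomial.X g : V n) * p ∈ IS S) : p ∈ IS S := by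
  rw [mem_IS] at h ⊢
  intro m hm
  obtain ⟨g', hg', hne⟩ := h (Finsupp.single g 1 + m) (by
    rw [MvPolynomial.mem_support_iff] at hm ⊢
    rwa [MvPolynomial.coeff_X_mul])
  refine ⟨g', hg', ?_⟩
  have : g ≠ g' := fun h => hg (h ▸ hg')
  simpa [Finsupp.single_apply, this] using hne

/-- multiplication by a variable on a quotient -/
def mulVar [NeZero q] {S : Set (GenIdx n)} (hS : Stable S) {g : GenIdx n} (hg : Good S g) :
    (V n ⧸ W q S hS) →ₗ[H n q] (V n ⧸ W q S hS) :=
  (W q S hS).liftQ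
    { toFun := fun p => (W q S hS).mkQ (MvPolynomial.X g * p)
      map_add' := fun a b => by rw [mul_add, map_add]
      map_smul' := fun r p => by
        rw [RingHom.id_apply, ← map_smul, eq_comm, ← sub_eq_zero, ← map_sub,
          Submodule.mkQ_apply, Submodule.Quotient.mk_eq_zero]
        have h := comm_mem (q := q) hS hg r p
        first
          | exact h
          | (rw [← neg_mem_iff, neg_sub]; exact h) }
    (fun p hp => by
      rw [LinearMap.mem_ker]
      change (W q S hS).mkQ (MvPolynomial.X g * p) = 0
      rw [Submodule.mkQ_apply, Submodule.Quotient.mk_eq_zero]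
      exact Ideal.mul_mem_left _ _ hp)

lemma mulVar_mk [NeZero q] {S : Set (GenIdx n)} (hS : Stable S) {g : GenIdx n} (hg : Good S g)
    (p : V n) : mulVar (q := q) hS hg ((W q S hS).mkQ p) = (W q S hS).mkQ (MvPolynomial.X g * p) :=
  rfl

lemma IS_mono {S S' : Set (GenIdx n)} (h : S ⊆ S') : IS S ≤ IS S' :=
  Ideal.span_mono (Set.image_mono h)

lemma step [NeZero q] {S S' : Set (GenIdx n)} (hS : Stable S) (hS' : Stable S') {g : GenIdx n}
    (hg : Good S g) (hSS : S' = insert g S) {k : ℕ}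
    (h : HasRes (H n q) (k + 1) (Nat.choose k) (V n ⧸ W q S hS)) :
    HasRes (H n q) (k + 2) (Nat.choose (k + 1)) (V n ⧸ W q S' hS') := by
  have hle : W q S hS ≤ W q S' hS' := fun p hp => IS_mono (by rw [hSS]; exact Set.subset_insert _ _) hp
  refine HasRes.cone (mulVar hS hg) (Submodule.factor hle) ?_ (Submodule.factor_surjective hle) ?_ h h.bump
    (by simp) (fun i => by rw [Nat.choose_succ_succ, add_comm])
  · rw [← LinearMap.ker_eq_bot, LinearMap.ker_eq_bot']
    intro x hx
    obtain ⟨p, rfl⟩ := (W q S hS).mkQ_surjective x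
    rw [mulVar_mk, Submodule.mkQ_apply, Submodule.Quotient.mk_eq_zero] at hx
    rw [Submodule.mkQ_apply, Submodule.Quotient.mk_eq_zero]
    exact X_regular hg.1 hx
  · intro x
    obtain ⟨p, rfl⟩ := (W q S hS).mkQ_surjective x
    have h1 : Submodule.factor hle ((W q S hS).mkQ p) = (W q S' hS').mkQ p := rfl
    rw [h1, Submodule.mkQ_apply, Submodule.Quotient.mk_eq_zero, mem_W]
    constructor
    · intro hp
      rw [IS, hSS, Set.image_insert_eq, Ideal.mem_span_insert] at hp
      obtain ⟨a, z, hz, rfl⟩ := hp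
      refine ⟨(W q S hS).mkQ a, ?_⟩
      rw [mulVar_mk, ← sub_eq_zero, ← map_sub, Submodule.mkQ_apply, Submodule.Quotient.mk_eq_zero,
        mul_comm, sub_add_cancel_left]
      exact neg_mem hz
    · rintro ⟨y, hy⟩
      obtain ⟨a, rfl⟩ := (W q S hS).mkQ_surjective y
      rw [mulVar_mk, ← sub_eq_zero, ← map_sub, Submodule.mkQ_apply,
        Submodule.Quotient.mk_eq_zero] at hy
      have h2 : (MvPolynomial.X g * a : V n) ∈ IS S' :=
        Ideal.mul_mem_right _ _ (Ideal.subset_span ⟨g, by rw [hSS]; simp, rfl⟩)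
      have h3 := Ideal.sub_mem _ h2 (hle hy)
      rwa [sub_sub_cancel] at h3

/-- position of a generator in the elimination order -/
def pos : GenIdx n → ℕ
  | Sum.inl i => n + i
  | Sum.inr (Sum.inl i) => 2 * n + i
  | Sum.inr (Sum.inr i) => i

/-- the first `k` generators -/
def Sk (n k : ℕ) : Set (GenIdx n) := {g | pos g < k}

lemma Sk_stable (k : ℕ) : Stable (Sk n k) := fun i h => by
  simp only [Sk, Set.mem_setOf_eq, pos] at h ⊢
  omega

lemma exists_pos {k : ℕ} (hk : k < 3 * n) : ∃ g : GenIdx n, pos g = k := by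
  by_cases h1 : k < n
  · exact ⟨iz ⟨k, h1⟩, rfl⟩
  by_cases h2 : k < 2 * n
  · exact ⟨ix ⟨k - n, by omega⟩, by simp only [pos]; omega⟩
  · exact ⟨iy ⟨k - 2 * n, by omega⟩, by simp only [pos]; omega⟩

lemma pos_inj : Function.Injective (pos (n := n)) := by
  intro a b h
  rcases a with a | a | a <;> rcases b with b | b | b <;> simp only [pos] at h <;>
    first
      | (exfalso; omega)
      | (have : a = b := by ext; omega
         rw [this])

lemma good_pos {k : ℕ} {g : GenIdx n} (hg : pos g = k) : Good (Sk n k) g := by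
  refine ⟨by simp [Sk, hg], ?_⟩
  rcases g with g | g | g
  · right; left
    refine ⟨⟨g, rfl⟩, fun i => ?_⟩
    simp only [Sk, Set.mem_setOf_eq, pos] at hg ⊢
    omega
  · right; right
    refine ⟨⟨g, rfl⟩, fun i => ?_, fun i => ?_⟩ <;>
    · simp only [Sk, Set.mem_setOf_eq, pos] at hg ⊢
      omega
  · left
    exact ⟨g, rfl⟩

lemma Sk_succ {k : ℕ} {g : GenIdx n} (hg : pos g = k) : Sk n (k + 1) = insert g (Sk n k) := by
  ext g'
  simp only [Sk, Set.mem_setOf_eq, Set.mem_insert_iff]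
  constructor
  · intro h
    by_cases h' : pos g' = k
    · left; exact pos_inj (by rw [h', hg])
    · right; omega
  · rintro (rfl | h) <;> omega

lemma res_all [NeZero q] (k : ℕ) (hk : k ≤ 3 * n) :
    HasRes (H n q) (k + 1) (Nat.choose k) (V n ⧸ W q (Sk n k) (Sk_stable k)) := by
  induction k with
  | zero =>
    have hbot : W q (Sk n 0) (Sk_stable 0) = ⊥ := by
      rw [eq_bot_iff]
      intro p hp
      rw [mem_W, IS] at hp
      have : Sk n 0 = ∅ := by ext; simp [Sk]
      rw [this] at hp
      simpa using hp
    have h1 : HasRes (H n q) 1 (Nat.choose 0) (H n q) := by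
      refine HasRes.mk' (F := H n q) (LinearEquiv.funUnique (Fin 1) (H n q) (H n q)) LinearMap.id
        (fun x => ⟨x, rfl⟩) ⟨?_, fun k => rfl⟩
      rw [LinearMap.ker_id]
      infer_instance
    exact h1.congr ((phiEquiv n q).symm.trans (Submodule.quotEquivOfEqBot _ hbot).symm)
  | succ k ih =>
    obtain ⟨g, hg⟩ := exists_pos (n := n) (k := k) (by omega)
    exact step (Sk_stable k) (Sk_stable (k + 1)) (good_pos hg) (Sk_succ hg) (ih (by omega))

lemma constCoeff_smul [NeZero q] (r : H n q) (p : V n) :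
    MvPolynomial.constantCoeff (r • p) = eps n q r * MvPolynomial.constantCoeff p := by
  have hmm : ∀ (e : GenIdx n →₀ ℕ) g, MvPolynomial.constantCoeff
      (mm (e + Finsupp.single g 1)) = 0 := by
    intro e g
    rw [← X_mul_mm, map_mul, MvPolynomial.constantCoeff_X, zero_mul]
  have hT : ∀ T : V n →ₗ[ℂ] V n, (∀ e, MvPolynomial.constantCoeff (T (mm e)) = 0) →
      ∀ p, MvPolynomial.constantCoeff (T p) = 0 := by
    intro T h p
    rw [eq_sum_mm p, map_sum, map_sum]
    refine Finset.sum_eq_zero fun e _ => ?_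
    rw [map_smul, MvPolynomial.smul_eq_C_mul, map_mul, h, mul_zero]
  induction r using H_induction generalizing p with
  | hc c =>
    rw [smul_V, AlgHom.commutes, Module.algebraMap_end_apply, AlgHom.commutes,
      MvPolynomial.smul_eq_C_mul, map_mul, MvPolynomial.constantCoeff_C]
    rfl
  | hX i =>
    have : eps n q (X n q i) = 0 := by simp [eps, X, fX]
    rw [this, zero_mul, smul_V, rho_X]
    refine hT _ (fun e => ?_) p
    rw [TX_mm, map_add, MvPolynomial.smul_eq_C_mul, MvPolynomial.smul_eq_C_mul, map_mul, map_mul,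
      hmm, hmm, mul_zero, mul_zero, add_zero]
  | hY i =>
    have : eps n q (Y n q i) = 0 := by simp [eps, Y, fY]
    rw [this, zero_mul, smul_V, rho_Y]
    refine hT _ (fun e => ?_) p
    rw [TY_mm, hmm]
  | hZ i =>
    have : eps n q (Z n q i) = 0 := by simp [eps, Z, fZ]
    rw [this, zero_mul, smul_V, rho_Z]
    refine hT _ (fun e => ?_) p
    rw [TZ_mm, MvPolynomial.smul_eq_C_mul, map_mul, hmm, mul_zero]
  | hm a b h1 h2 => rw [mul_smul, h1, h2, map_mul, mul_assoc]
  | ha a b h1 h2 => rw [add_smul, map_add, h1, h2, map_add, add_mul]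

/-- constant coefficient as a module map -/
def augm (n : ℕ) (q : ℂ) [NeZero q] : V n →ₗ[H n q] trivMod n q where
  toFun p := (MvPolynomial.constantCoeff p : ℂ)
  map_add' := fun a b => map_add MvPolynomial.constantCoeff a b
  map_smul' := fun r p => constCoeff_smul r p

lemma res_triv [NeZero q] :
    HasRes (H n q) (3 * n + 1) (Nat.choose (3 * n)) (trivMod n q) := by
  have hker : W q (Sk n (3 * n)) (Sk_stable _) = LinearMap.ker (augm n q) := by
    ext p
    rw [mem_W, mem_IS, LinearMap.mem_ker]
    have h0 : augm n q p = 0 ↔ MvPolynomial.coeff 0 p = 0 := Iff.rfl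
    rw [h0]
    constructor
    · intro h
      by_contra hne
      obtain ⟨g, -, h2⟩ := h 0 (MvPolynomial.mem_support_iff.2 hne)
      exact h2 rfl
    · intro h m hm
      have : m ≠ 0 := by
        rintro rfl
        exact MvPolynomial.mem_support_iff.1 hm h
      obtain ⟨g, hg⟩ := Finsupp.ne_iff.1 this
      refine ⟨g, ?_, hg⟩
      rcases g with g | g | g <;> simp only [Sk, Set.mem_setOf_eq, pos] <;> omega
  have hsurj : Function.Surjective (augm n q) := by
    intro c
    let c₀ : ℂ := c
    exact ⟨(MvPolynomial.C c₀ : V n), MvPolynomial.constantCoeff_C _ c₀⟩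
  exact (res_all (3 * n) le_rfl).congr ((Submodule.quotEquivOfEq _ _ hker).trans
    (LinearMap.quotKerEquivOfSurjective _ hsurj))

end filtration

/-- For `n ≥ 1` and `q` nonzero and not a root of unity, the trivial
module `ℂ_ε` admits a free resolution of length `3n` whose `k`-th term is a free left
`𝔥_n(q)`-module of rank `(3n).choose k` (in particular the terms vanish in degrees
above `3n`, since the rank is `0` there). -/
theorem koszul_type_resolution (n : ℕ) (hn : 1 ≤ n) (q : ℂ) (hq : q ≠ 0)
    (hq' : NotRootOfUnity q) :
    ∃ P : ProjectiveResolution (trivMod n q),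
      ∀ k : ℕ,
        Nonempty ((P.complex.X k) ≃ₗ[H n q] (Fin (Nat.choose (3 * n) k) → H n q)) := by
  haveI : NeZero q := ⟨hq⟩
  exact HasRes.res res_triv

end QHeisenberg
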